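/- Let d ≥ 1, 1 ≤ i ≤ d, and let φ : ℝ^d → [0,1] be radial, smooth, supported in {4/3 ≤ |ξ| ≤ 3/2}, not identically zero. Define f_n(x) = Γ_n ∑_{k=1}^n (1/k) χ(2^k x) with χ = ∂_i (φ̌) (inverse Fourier transform of φ) and Γ_n = 1/ln(ln n). Then the Riesz transform ℛ_i f_n, defined by the Fourier multiplier ξ_i/|ξ|, satisfies |ℛ_i f_n(0)| ≥ c̃ Γ_n ∑_{k=1}^n 1/k ≥ c̃ Γ_n ln n for a constant c̃ > 0 independent of n. -/

import Mathlib

open MeasureTheory Finset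
open scoped FourierTransform

/-- `Γ_n = 1 / ln(ln n)`. -/
noncomputable def Gam (n : ℕ) : ℝ := 1 / Real.log (Real.log n)

/-- The (complex-valued) inverse Fourier transform of a real function. -/
noncomputable def phinv (d : ℕ) (φ : EuclideanSpace ℝ (Fin d) → ℝ) :
    EuclideanSpace ℝ (Fin d) → ℂ :=
  𝓕⁻ (fun ξ => (φ ξ : ℂ))

/-- The `i`-th Riesz transform, defined as the Fourier multiplier `ξ_i/|ξ|`. -/
noncomputable def Riesz (d : ℕ) (i : Fin d) (f : EuclideanSpace ℝ (Fin d) → ℂ) :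
    EuclideanSpace ℝ (Fin d) → ℂ :=
  𝓕⁻ (fun ξ => ((ξ i / ‖ξ‖ : ℝ) : ℂ) * 𝓕 f ξ)

/-- `f_n(x) = Γ_n ∑_{k=1}^n (1/k) χ(2^k x)` with `χ = ∂_i(φ̌)`. -/
noncomputable def fseq (d : ℕ) (i : Fin d) (φ : EuclideanSpace ℝ (Fin d) → ℝ) (n : ℕ) :
    EuclideanSpace ℝ (Fin d) → ℂ :=
  fun x => (Gam n : ℂ) * ∑ k ∈ Finset.Icc 1 n, ((1 / (k : ℝ) : ℝ) : ℂ) *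
    fderiv ℝ (phinv d φ) ((2 : ℝ) ^ k • x) (EuclideanSpace.single i 1)

/-!
Let `v` be the `i`-th unit vector and `T` the Fourier multiplier with symbol `⟪ξ, v⟫ / ‖ξ‖`. The
symbol is invariant under positive dilations, so `T` commutes with them; dilations fix the origin,
so all the summands of `f_n` contribute the same number `(T χ)(0)` there, weighted by `Γ_n / k`.
Since `χ̂(ξ) = 2πi ⟪ξ, v⟫ φ(ξ)`, that number is `2πi ∫ ⟪ξ, v⟫² / ‖ξ‖ φ(ξ) dξ`, and the integrand is
nonnegative everywhere and positive on a nonempty open set.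
-/

open FourierTransform InnerProductSpace LineDeriv Module
open scoped SchwartzMap

section FourierLinearity

variable {V E : Type*} [NormedAddCommGroup V] [InnerProductSpace ℝ V] [FiniteDimensional ℝ V]
  [MeasurableSpace V] [BorelSpace V] [NormedAddCommGroup E] [NormedSpace ℂ E]

lemma fourier_const_smul (c : ℂ) (f : V → E) : 𝓕 (c • f) = c • 𝓕 f :=
  VectorFourier.fourierIntegral_const_smul _ _ _ f c

lemma fourierInv_const_smul (c : ℂ) (f : V → E) : 𝓕⁻ (c • f) = c • 𝓕⁻ f := by
  ext x
  simp only [Real.fourierInv_eq_fourier_neg, fourier_const_smul, Pi.smul_apply]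

lemma fourier_finsetSum {ι : Type*} {s : Finset ι} {f : ι → V → E}
    (hf : ∀ k ∈ s, Integrable (f k)) : 𝓕 (∑ k ∈ s, f k) = ∑ k ∈ s, 𝓕 (f k) := by
  ext ξ
  simp only [Real.fourier_eq, Finset.sum_apply, Finset.smul_sum]
  exact integral_finsetSum s fun k hk => (Real.fourierIntegral_convergent_iff ξ).2 (hf k hk)

lemma fourierInv_finsetSum {ι : Type*} {s : Finset ι} {f : ι → V → E}
    (hf : ∀ k ∈ s, Integrable (f k)) : 𝓕⁻ (∑ k ∈ s, f k) = ∑ k ∈ s, 𝓕⁻ (f k) := by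
  ext x
  simp only [Real.fourierInv_eq_fourier_neg, fourier_finsetSum hf, Finset.sum_apply]

lemma fourier_comp_smul (f : V → E) {r : ℝ} (hr : r ≠ 0) (ξ : V) :
    𝓕 (fun x => f (r • x)) ξ = |(r ^ finrank ℝ V)⁻¹| • 𝓕 f (r⁻¹ • ξ) := by
  rw [Real.fourier_eq, Real.fourier_eq, ← Measure.integral_comp_smul]
  simp only [real_inner_smul_left, real_inner_smul_right, inv_mul_cancel_left₀ hr]

lemma fourierInv_comp_smul (f : V → E) {r : ℝ} (hr : r ≠ 0) (x : V) :
    𝓕⁻ (fun ξ => f (r • ξ)) x = |(r ^ finrank ℝ V)⁻¹| • 𝓕⁻ f (r⁻¹ • x) := by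
  simp only [Real.fourierInv_eq_fourier_neg, fourier_comp_smul f hr, smul_neg]

end FourierLinearity

section FourierMultiplier

variable {V E : Type*} [NormedAddCommGroup V] [InnerProductSpace ℝ V] [FiniteDimensional ℝ V]
  [MeasurableSpace V] [BorelSpace V] [NormedAddCommGroup E] [NormedSpace ℂ E]

/-- The Fourier multiplier operator `f ↦ 𝓕⁻ (m · 𝓕 f)` with symbol `m`. It acts on functions, and
no smoothness of `m` is required, unlike for `SchwartzMap.fourierMultiplierCLM`: the symbols of the
Riesz transforms are singular at the origin. -/
noncomputable def fourierMultiplier (m : V → ℂ) (f : V → E) : V → E :=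
  𝓕⁻ fun ξ => m ξ • 𝓕 f ξ

lemma fourierMultiplier_const_smul (m : V → ℂ) (c : ℂ) (f : V → E) :
    fourierMultiplier m (c • f) = c • fourierMultiplier m f := by
  simp only [fourierMultiplier, ← fourierInv_const_smul, fourier_const_smul]
  congr 1
  ext ξ
  exact smul_comm (m ξ) c (𝓕 f ξ)

lemma fourierMultiplier_finsetSum {ι : Type*} {s : Finset ι} {m : V → ℂ} {f : ι → V → E}
    (hf : ∀ k ∈ s, Integrable (f k)) (hmf : ∀ k ∈ s, Integrable fun ξ => m ξ • 𝓕 (f k) ξ) :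
    fourierMultiplier m (∑ k ∈ s, f k) = ∑ k ∈ s, fourierMultiplier m (f k) := by
  simp only [fourierMultiplier, ← fourierInv_finsetSum hmf, fourier_finsetSum hf]
  congr 1
  ext ξ
  simp only [Finset.sum_apply, Finset.smul_sum]

variable {m : V → ℂ} {r : ℝ}

lemma smul_fourier_comp_smul (hr : r ≠ 0) (hm : ∀ ξ, m (r • ξ) = m ξ) (f : V → E) (ξ : V) :
    m ξ • 𝓕 (fun x => f (r • x)) ξ =
      |(r ^ finrank ℝ V)⁻¹| • m (r⁻¹ • ξ) • 𝓕 f (r⁻¹ • ξ) := by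
  rw [fourier_comp_smul f hr, ← hm (r⁻¹ • ξ), smul_inv_smul₀ hr, smul_comm]

lemma integrable_smul_fourier_comp_smul (hr : r ≠ 0) (hm : ∀ ξ, m (r • ξ) = m ξ) {f : V → E}
    (hmf : Integrable fun ξ => m ξ • 𝓕 f ξ) :
    Integrable fun ξ => m ξ • 𝓕 (fun x => f (r • x)) ξ := by
  simp only [smul_fourier_comp_smul hr hm]
  exact (hmf.comp_smul (inv_ne_zero hr)).smul |(r ^ finrank ℝ V)⁻¹|

lemma fourierMultiplier_comp_smul (hr : r ≠ 0) (hm : ∀ ξ, m (r • ξ) = m ξ) (f : V → E) :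
    fourierMultiplier m (fun x => f (r • x)) = fun x => fourierMultiplier m f (r • x) := by
  ext x
  let J : ℝ := |(r ^ finrank ℝ V)⁻¹|
  have hJ : J * |((r⁻¹) ^ finrank ℝ V)⁻¹| = 1 := by
    rw [← abs_mul, inv_pow, inv_inv, inv_mul_cancel₀ (pow_ne_zero _ hr), abs_one]
  calc fourierMultiplier m (fun x => f (r • x)) x
      = 𝓕⁻ ((J : ℂ) • fun ξ => m (r⁻¹ • ξ) • 𝓕 f (r⁻¹ • ξ)) x := by
        simp only [fourierMultiplier, smul_fourier_comp_smul hr hm]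
        rfl
    _ = (J * |((r⁻¹) ^ finrank ℝ V)⁻¹|) • 𝓕⁻ (fun ξ => m ξ • 𝓕 f ξ) (r • x) := by
        rw [fourierInv_const_smul, Pi.smul_apply,
          fourierInv_comp_smul (fun ξ => m ξ • 𝓕 f ξ) (inv_ne_zero hr), inv_inv, Complex.coe_smul,
          smul_smul]
    _ = fourierMultiplier m f (r • x) := by rw [hJ, one_smul, fourierMultiplier]

lemma fourierMultiplier_sum_smul_comp_smul {ι : Type*} {s : Finset ι} {ρ : ι → ℝ}
    (hρ : ∀ k, ρ k ≠ 0) (hm : ∀ k ξ, m (ρ k • ξ) = m ξ) {f : V → E} (hf : Integrable f)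
    (hmf : Integrable fun ξ => m ξ • 𝓕 f ξ) (a : ι → ℂ) (x : V) :
    fourierMultiplier m (fun y => ∑ k ∈ s, a k • f (ρ k • y)) x =
      ∑ k ∈ s, a k • fourierMultiplier m f (ρ k • x) := by
  have hsum : (fun x => ∑ k ∈ s, a k • f (ρ k • x)) = ∑ k ∈ s, a k • fun x => f (ρ k • x) := by
    ext x
    simp only [Finset.sum_apply, Pi.smul_apply]
  have hint (k : ι) : Integrable (a k • fun x => f (ρ k • x)) := (hf.comp_smul (hρ k)).smul (a k)
  have hmint (k : ι) : Integrable fun ξ => m ξ • 𝓕 (a k • fun x => f (ρ k • x)) ξ := by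
    simp only [fourier_const_smul, Pi.smul_apply, smul_comm _ (a k)]
    exact (integrable_smul_fourier_comp_smul (hρ k) (hm k) hmf).smul (a k)
  rw [hsum, fourierMultiplier_finsetSum (fun k _ => hint k) (fun k _ => hmint k), Finset.sum_apply]
  simp only [fourierMultiplier_const_smul, fourierMultiplier_comp_smul (hρ _) (hm _), Pi.smul_apply]

end FourierMultiplier

section RieszSymbol

variable {V : Type*} [NormedAddCommGroup V] [InnerProductSpace ℝ V]

/-- The symbol `⟪ξ, v⟫ / ‖ξ‖` of the Riesz transform in direction `v`, with value `0` at `ξ = 0`. -/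
noncomputable def rieszSymbol (v ξ : V) : ℂ := ((⟪ξ, v⟫_ℝ / ‖ξ‖ : ℝ) : ℂ)

lemma rieszSymbol_smul (v : V) {r : ℝ} (hr : 0 < r) (ξ : V) :
    rieszSymbol v (r • ξ) = rieszSymbol v ξ := by
  rw [rieszSymbol, rieszSymbol, real_inner_smul_left, norm_smul_of_nonneg hr.le,
    mul_div_mul_left _ _ hr.ne']

lemma inner_sq_div_norm_le (ξ v : V) : ⟪ξ, v⟫_ℝ ^ 2 / ‖ξ‖ ≤ ‖v‖ ^ 2 * ‖ξ‖ := by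
  refine div_le_of_le_mul₀ (norm_nonneg ξ) (by positivity) ?_
  calc ⟪ξ, v⟫_ℝ ^ 2 ≤ (‖ξ‖ * ‖v‖) ^ 2 := sq_le_sq' (neg_le_of_abs_le (abs_real_inner_le_norm ξ v))
        (real_inner_le_norm ξ v)
    _ = ‖v‖ ^ 2 * ‖ξ‖ * ‖ξ‖ := by ring

lemma integrable_inner_sq_div_norm_smul [MeasurableSpace V] [BorelSpace V]
    [SecondCountableTopology V] {μ : Measure V} [μ.HasTemperateGrowth]
    {F : Type*} [NormedAddCommGroup F] [NormedSpace ℝ F] (Φ : 𝓢(V, F)) (v : V) :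
    Integrable (fun ξ => (⟪ξ, v⟫_ℝ ^ 2 / ‖ξ‖) • Φ ξ) μ := by
  have hmeas : Measurable fun ξ : V => ⟪ξ, v⟫_ℝ ^ 2 / ‖ξ‖ := by fun_prop
  refine ((Φ.integrable_pow_mul μ 1).const_mul (‖v‖ ^ 2)).mono'
    (hmeas.aestronglyMeasurable.smul Φ.continuous.aestronglyMeasurable) (.of_forall fun ξ => ?_)
  calc ‖(⟪ξ, v⟫_ℝ ^ 2 / ‖ξ‖) • Φ ξ‖
      = ⟪ξ, v⟫_ℝ ^ 2 / ‖ξ‖ * ‖Φ ξ‖ := norm_smul_of_nonneg (by positivity) _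
    _ ≤ ‖v‖ ^ 2 * ‖ξ‖ * ‖Φ ξ‖ := by gcongr; exact inner_sq_div_norm_le ξ v
    _ = ‖v‖ ^ 2 * (‖ξ‖ ^ 1 * ‖Φ ξ‖) := by rw [pow_one, mul_assoc]

lemma dense_setOf_inner_ne_zero {v : V} (hv : v ≠ 0) : Dense {ξ : V | ⟪ξ, v⟫_ℝ ≠ 0} := by
  have hopen : IsOpenMap (innerSL ℝ v) :=
    (innerSL ℝ v).isOpenMap_of_ne_zero (by rwa [← map_zero (innerSL ℝ), Ne, innerSL_inj])
  simpa only [real_inner_comm] using! (dense_compl_singleton (0 : ℝ)).preimage hopen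

lemma integral_inner_sq_div_norm_mul_pos [MeasurableSpace V] {μ : Measure V}
    [μ.IsOpenPosMeasure] {v : V} (hv : v ≠ 0) {φ : V → ℝ} (hcont : Continuous φ)
    (hnonneg : ∀ ξ, 0 ≤ φ ξ) (hne : φ ≠ 0)
    (hint : Integrable (fun ξ => ⟪ξ, v⟫_ℝ ^ 2 / ‖ξ‖ * φ ξ) μ) :
    0 < ∫ ξ, ⟪ξ, v⟫_ℝ ^ 2 / ‖ξ‖ * φ ξ ∂μ := by
  let U : Set V := {ξ | φ ξ ≠ 0} ∩ {ξ | ⟪ξ, v⟫_ℝ ≠ 0}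
  have hφ : IsOpen {ξ | φ ξ ≠ 0} := isOpen_ne_fun hcont continuous_const
  have hU : IsOpen U := hφ.inter (isOpen_ne_fun (by fun_prop) continuous_const)
  have hU_nonempty : U.Nonempty :=
    (dense_setOf_inner_ne_zero hv).inter_open_nonempty _ hφ (Function.ne_iff.1 hne)
  have hU_support : U ⊆ Function.support fun ξ => ⟪ξ, v⟫_ℝ ^ 2 / ‖ξ‖ * φ ξ := by
    rintro ξ ⟨hφξ, hξv⟩
    have hξ : ξ ≠ 0 := by
      rintro rfl
      exact hξv (inner_zero_left v)
    exact mul_ne_zero (div_ne_zero (pow_ne_zero 2 hξv) (norm_ne_zero_iff.2 hξ)) hφξ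
  rw [integral_pos_iff_support_of_nonneg
    (fun ξ => mul_nonneg (by positivity) (hnonneg ξ)) hint]
  exact (hU.measure_pos μ hU_nonempty).trans_le (measure_mono hU_support)

end RieszSymbol

section RieszOfDerivative

variable {V : Type*} [NormedAddCommGroup V] [InnerProductSpace ℝ V] [FiniteDimensional ℝ V]
  [MeasurableSpace V] [BorelSpace V]
  {E : Type*} [NormedAddCommGroup E] [NormedSpace ℂ E] [CompleteSpace E]

/-- The function `χ = ∂_v (Φ̌)`, the derivative in direction `v` of the inverse Fourier transform of
`Φ`, as a Schwartz function. -/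
noncomputable def lineDerivFourierInv (v : V) (Φ : 𝓢(V, E)) : 𝓢(V, E) := ∂_{v} (𝓕⁻ Φ)

lemma fourier_lineDerivFourierInv (Φ : 𝓢(V, E)) (v ξ : V) :
    𝓕 (lineDerivFourierInv v Φ) ξ = (2 * Real.pi * Complex.I) • ⟪ξ, v⟫_ℝ • Φ ξ := by
  have hgrowth : (inner ℝ · v : V → ℝ).HasTemperateGrowth := by fun_prop
  rw [lineDerivFourierInv, SchwartzMap.fourier_lineDerivOp_eq, fourier_fourierInv_eq, smul_apply,
    SchwartzMap.smulLeftCLM_apply_apply hgrowth]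

lemma rieszSymbol_smul_fourier_lineDerivFourierInv (Φ : 𝓢(V, E)) (v ξ : V) :
    rieszSymbol v ξ • 𝓕 ⇑(lineDerivFourierInv v Φ) ξ =
      (2 * Real.pi * Complex.I) • (⟪ξ, v⟫_ℝ ^ 2 / ‖ξ‖) • Φ ξ := by
  rw [← SchwartzMap.fourier_coe, fourier_lineDerivFourierInv, smul_comm, rieszSymbol,
    Complex.coe_smul, smul_smul, div_mul_eq_mul_div, sq]

lemma integrable_rieszSymbol_smul_fourier_lineDerivFourierInv (Φ : 𝓢(V, E)) (v : V) :
    Integrable fun ξ => rieszSymbol v ξ • 𝓕 ⇑(lineDerivFourierInv v Φ) ξ := by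
  simp only [rieszSymbol_smul_fourier_lineDerivFourierInv]
  exact (integrable_inner_sq_div_norm_smul Φ v).smul (2 * Real.pi * Complex.I)

lemma fourierMultiplier_rieszSymbol_lineDerivFourierInv_zero (Φ : 𝓢(V, E)) (v : V) :
    fourierMultiplier (rieszSymbol v) (lineDerivFourierInv v Φ) 0 =
      (2 * Real.pi * Complex.I) • ∫ ξ, (⟪ξ, v⟫_ℝ ^ 2 / ‖ξ‖) • Φ ξ := by
  rw [fourierMultiplier, Real.fourierInv_eq, ← integral_smul]
  simp only [inner_zero_right, AddChar.map_zero_eq_one, one_smul,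
    rieszSymbol_smul_fourier_lineDerivFourierInv]

end RieszOfDerivative

section LacunarySum

variable {d : ℕ}

lemma riesz_eq_fourierMultiplier (i : Fin d) (f : EuclideanSpace ℝ (Fin d) → ℂ) :
    Riesz d i f = fourierMultiplier (rieszSymbol (EuclideanSpace.single i 1)) f := by
  simp [Riesz, fourierMultiplier, rieszSymbol, EuclideanSpace.inner_single_right]

lemma fderiv_phinv (φ : 𝓢(EuclideanSpace ℝ (Fin d), ℝ)) (x v : EuclideanSpace ℝ (Fin d)) :
    fderiv ℝ (phinv d φ) x v = lineDerivFourierInv v (φ.postcompCLM Complex.ofRealCLM) x := by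
  rw [lineDerivFourierInv, SchwartzMap.lineDerivOp_apply_eq_fderiv, SchwartzMap.fourierInv_coe]
  rfl

lemma fseq_eq_sum_smul (i : Fin d) (φ : 𝓢(EuclideanSpace ℝ (Fin d), ℝ)) (n : ℕ) :
    fseq d i φ n = fun x => ∑ k ∈ Icc 1 n, ((Gam n * (1 / k) : ℝ) : ℂ) •
      lineDerivFourierInv (EuclideanSpace.single i 1) (φ.postcompCLM Complex.ofRealCLM)
        ((2 : ℝ) ^ k • x) := by
  ext x
  simp only [fseq, fderiv_phinv, Finset.mul_sum, smul_eq_mul, Complex.ofReal_mul, mul_assoc]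

lemma riesz_fseq_zero (i : Fin d) (φ : 𝓢(EuclideanSpace ℝ (Fin d), ℝ)) (n : ℕ) :
    Riesz d i (fseq d i φ n) 0 =
      ((2 * Real.pi * (∫ ξ, ⟪ξ, EuclideanSpace.single i 1⟫_ℝ ^ 2 / ‖ξ‖ * φ ξ) * Gam n *
        ∑ k ∈ Icc 1 n, (1 : ℝ) / k : ℝ) : ℂ) * Complex.I := by
  let v : EuclideanSpace ℝ (Fin d) := EuclideanSpace.single i 1
  let Φ : 𝓢(EuclideanSpace ℝ (Fin d), ℂ) := φ.postcompCLM Complex.ofRealCLM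
  have hΦ : ∫ ξ, (⟪ξ, v⟫_ℝ ^ 2 / ‖ξ‖) • Φ ξ = ((∫ ξ, ⟪ξ, v⟫_ℝ ^ 2 / ‖ξ‖ * φ ξ : ℝ) : ℂ) := by
    rw [← integral_complex_ofReal]
    simp [Φ]
  rw [riesz_eq_fourierMultiplier, fseq_eq_sum_smul,
    fourierMultiplier_sum_smul_comp_smul (fun k => by positivity)
      (fun k => rieszSymbol_smul v (by positivity)) (lineDerivFourierInv v Φ).integrable
      (integrable_rieszSymbol_smul_fourier_lineDerivFourierInv Φ v)]
  simp only [smul_zero]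
  rw [fourierMultiplier_rieszSymbol_lineDerivFourierInv_zero Φ v, hΦ, ← Finset.sum_smul,
    ← Complex.ofReal_sum, ← Finset.mul_sum]
  push_cast [smul_eq_mul]
  ring

end LacunarySum

lemma gam_pos {n : ℕ} (hn : 3 ≤ n) : 0 < Gam n := by
  have hexp : Real.exp 1 < n := Real.exp_one_lt_three.trans_le (by exact_mod_cast hn)
  have hlog : 1 < Real.log n := (Real.lt_log_iff_exp_lt (by positivity)).2 hexp
  exact one_div_pos.2 (Real.log_pos hlog)

lemma log_le_sum_one_div (n : ℕ) : Real.log n ≤ ∑ k ∈ Icc 1 n, (1 : ℝ) / k := by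
  simpa [harmonic_eq_sum_Icc] using log_le_harmonic_floor n n.cast_nonneg

theorem stmt9_general {d : ℕ} (i : Fin d) (φ : 𝓢(EuclideanSpace ℝ (Fin d), ℝ))
    (hnonneg : ∀ ξ, 0 ≤ φ ξ) (hne : ⇑φ ≠ 0) :
    ∃ c : ℝ, 0 < c ∧ ∀ n : ℕ, 3 ≤ n →
      c * Gam n * ∑ k ∈ Icc 1 n, (1 : ℝ) / k ≤ ‖Riesz d i (fseq d i φ n) 0‖ ∧
      c * Gam n * Real.log n ≤ c * Gam n * ∑ k ∈ Icc 1 n, (1 : ℝ) / k := by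
  let v : EuclideanSpace ℝ (Fin d) := EuclideanSpace.single i 1
  have hv : v ≠ 0 := by simp [v]
  have hpos : 0 < ∫ ξ, ⟪ξ, v⟫_ℝ ^ 2 / ‖ξ‖ * φ ξ :=
    integral_inner_sq_div_norm_mul_pos hv φ.continuous hnonneg hne
      (integrable_inner_sq_div_norm_smul φ v)
  refine ⟨2 * Real.pi * ∫ ξ, ⟪ξ, v⟫_ℝ ^ 2 / ‖ξ‖ * φ ξ, by positivity, fun n hn => ⟨?_, ?_⟩⟩
  · rw [riesz_fseq_zero, norm_mul, Complex.norm_I, mul_one, Complex.norm_real]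
    exact le_abs_self _
  · have hGam : 0 < Gam n := gam_pos hn
    gcongr
    exact log_le_sum_one_div n

/-- for radial, smooth `φ : ℝ^d → [0,1]` supported in `{4/3 ≤ |ξ| ≤ 3/2}`,
not identically zero, and `f_n` built from `χ = ∂_i(φ̌)`, the Riesz transform satisfies
`|ℛ_i f_n(0)| ≥ c̃ Γ_n ∑_{k=1}^n 1/k ≥ c̃ Γ_n ln n` for some `c̃ > 0` independent of `n`. -/
theorem stmt9 (d : ℕ) (hd : 1 ≤ d) (i : Fin d)
    (φ : EuclideanSpace ℝ (Fin d) → ℝ)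
    (hsm : ContDiff ℝ (⊤ : ℕ∞) φ)
    (hrange : ∀ ξ, φ ξ ∈ Set.Icc (0 : ℝ) 1)
    (hradial : ∀ ξ η : EuclideanSpace ℝ (Fin d), ‖ξ‖ = ‖η‖ → φ ξ = φ η)
    (hsupp : ∀ ξ, φ ξ ≠ 0 → 4 / 3 ≤ ‖ξ‖ ∧ ‖ξ‖ ≤ 3 / 2)
    (hne : φ ≠ 0) :
    ∃ c : ℝ, 0 < c ∧ ∀ n : ℕ, 3 ≤ n →
      c * Gam n * ∑ k ∈ Finset.Icc 1 n, (1 : ℝ) / k ≤ ‖Riesz d i (fseq d i φ n) 0‖ ∧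
      c * Gam n * Real.log n ≤ c * Gam n * ∑ k ∈ Finset.Icc 1 n, (1 : ℝ) / k := by
  have hcompact : HasCompactSupport φ := .of_support_subset_isCompact
    (isCompact_closedBall 0 (3 / 2)) fun ξ hξ => mem_closedBall_zero_iff.2 (hsupp ξ hξ).2
  exact stmt9_general i (hcompact.toSchwartzMap hsm) (fun ξ => (hrange ξ).1) hne
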